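/- arXiv:1702.03829 — 2 statements merged into one kernel-verified Lean document; each statement's English description precedes it below -/
import Mathlib

section
/- Let y : ℝ → ℝ be twice differentiable, let φ, ψ : ℝ × ℝ → ℝ be twice continuously differentiable, define t : ℝ → ℝ by t(x) = ψ(x, y(x)), and let u : ℝ → ℝ be twice differentiable. Suppose that u(t(x)) = φ(x, y(x)) for all x in a neighborhood of x₀, and that D := ψ_x + ψ_y · y′(x₀) ≠ 0 at (x₀, y(x₀)). Then u″(t(x₀)) = [−J · y″(x₀) + (ψ_x + ψ_y y′)·(φ_{xx} + 2φ_{xy} y′ + φ_{yy} (y′)²) − (φ_x + φ_y y′)·(ψ_{xx} + 2ψ_{xy} y′ + ψ_{yy} (y′)²)] / D³, where J = φ_x ψ_y − φ_y ψ_x, y′ = y′(x₀), and all partial derivatives of φ and ψ are evaluated at (x₀, y(x₀)). -/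
/-- First-order partial (directional) derivative of `f : ℝ × ℝ → ℝ` at `p`
in the direction `v`. -/
noncomputable def pderiv₁ (f : ℝ × ℝ → ℝ) (v p : ℝ × ℝ) : ℝ :=
  fderiv ℝ f p v

/-- Second-order partial derivative of `f : ℝ × ℝ → ℝ` at `p`: first in the
direction `v`, then in the direction `w`. -/
noncomputable def pderiv₂ (f : ℝ × ℝ → ℝ) (v w p : ℝ × ℝ) : ℝ :=
  fderiv ℝ (fun q => fderiv ℝ f q v) p w

theorem aux_d1 (f : ℝ × ℝ → ℝ) (hf : Differentiable ℝ f) (y : ℝ → ℝ)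
    (hy : Differentiable ℝ y) (x : ℝ) :
    HasDerivAt (fun x => f (x, y x))
      (pderiv₁ f (1, 0) (x, y x) + pderiv₁ f (0, 1) (x, y x) * deriv y x) x := by
  have h1 : HasDerivAt (fun x => (x, y x)) ((1 : ℝ), deriv y x) x :=
    (hasDerivAt_id x).prodMk (hy x).hasDerivAt
  have h2 := (hf (x, y x)).hasFDerivAt.comp_hasDerivAt x h1
  have e : ((1 : ℝ), deriv y x) = (1, 0) + deriv y x • ((0 : ℝ), (1 : ℝ)) := by
    ext <;> simp
  rw [e, map_add, map_smul, smul_eq_mul, mul_comm] at h2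
  exact h2

theorem aux_diff (f : ℝ × ℝ → ℝ) (hf : ContDiff ℝ 2 f) (v : ℝ × ℝ) :
    Differentiable ℝ (pderiv₁ f v) := by
  have h : ContDiff ℝ 1 (fderiv ℝ f) := hf.fderiv_right (by norm_num)
  have h' : Differentiable ℝ (fderiv ℝ f) := h.differentiable (by norm_num)
  intro p
  exact (h' p).clm_apply (differentiableAt_const v)

theorem aux_symm (f : ℝ × ℝ → ℝ) (hf : ContDiff ℝ 2 f) (v w p : ℝ × ℝ) :
    pderiv₂ f v w p = pderiv₂ f w v p := by
  have h : ContDiff ℝ 1 (fderiv ℝ f) := hf.fderiv_right (by norm_num)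
  have h' : Differentiable ℝ (fderiv ℝ f) := h.differentiable (by norm_num)
  have hs : IsSymmSndFDerivAt ℝ f p := hf.contDiffAt.isSymmSndFDerivAt (by simp)
  have key : ∀ a b, pderiv₂ f a b p = fderiv ℝ (fderiv ℝ f) p b a := by
    intro a b
    unfold pderiv₂
    rw [fderiv_clm_apply (h' p) (differentiableAt_const a)]
    simp
  rw [key, key]
  exact hs.eq w v

theorem aux_d2 (f : ℝ × ℝ → ℝ) (hf : ContDiff ℝ 2 f) (y : ℝ → ℝ)
    (hy : Differentiable ℝ y) (hy' : Differentiable ℝ (deriv y)) (x : ℝ) :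
    HasDerivAt (fun x => pderiv₁ f (1, 0) (x, y x) + pderiv₁ f (0, 1) (x, y x) * deriv y x)
      (pderiv₂ f (1, 0) (1, 0) (x, y x)
        + 2 * pderiv₂ f (1, 0) (0, 1) (x, y x) * deriv y x
        + pderiv₂ f (0, 1) (0, 1) (x, y x) * (deriv y x) ^ 2
        + pderiv₁ f (0, 1) (x, y x) * deriv (deriv y) x) x := by
  have h1 := aux_d1 _ (aux_diff f hf (1, 0)) y hy x
  have h2 := aux_d1 _ (aux_diff f hf (0, 1)) y hy x
  have h3 := h1.add (h2.mul (hy' x).hasDerivAt)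
  refine h3.congr_deriv ?_
  have e : ∀ v w p, pderiv₁ (pderiv₁ f v) w p = pderiv₂ f v w p := fun _ _ _ => rfl
  simp only [e]
  rw [aux_symm f hf (0, 1) (1, 0)]
  ring

/-- Second-order transformation formula under the point transformation
`u = φ(x, y)`, `t = ψ(x, y)` along a curve `y = y(x)`:
`u″(t(x₀)) = [−J y″ + (ψ_x + ψ_y y′)(φ_xx + 2φ_xy y′ + φ_yy y′²)
  − (φ_x + φ_y y′)(ψ_xx + 2ψ_xy y′ + ψ_yy y′²)] / D³`,
where `D = ψ_x + ψ_y y′ ≠ 0` and `J = φ_x ψ_y − φ_y ψ_x`. -/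
theorem second_order_point_transformation
    (y : ℝ → ℝ) (hy : Differentiable ℝ y) (hy' : Differentiable ℝ (deriv y))
    (φ ψ : ℝ × ℝ → ℝ) (hφ : ContDiff ℝ 2 φ) (hψ : ContDiff ℝ 2 ψ)
    (t : ℝ → ℝ) (ht : ∀ x, t x = ψ (x, y x))
    (u : ℝ → ℝ) (hu : Differentiable ℝ u) (hu' : Differentiable ℝ (deriv u))
    (x₀ : ℝ)
    (huφ : ∀ᶠ x in nhds x₀, u (t x) = φ (x, y x))
    (hD : pderiv₁ ψ (1, 0) (x₀, y x₀)
        + pderiv₁ ψ (0, 1) (x₀, y x₀) * deriv y x₀ ≠ 0) :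
    deriv (deriv u) (t x₀)
      = (-(pderiv₁ φ (1, 0) (x₀, y x₀) * pderiv₁ ψ (0, 1) (x₀, y x₀)
            - pderiv₁ φ (0, 1) (x₀, y x₀) * pderiv₁ ψ (1, 0) (x₀, y x₀))
            * deriv (deriv y) x₀
          + (pderiv₁ ψ (1, 0) (x₀, y x₀)
              + pderiv₁ ψ (0, 1) (x₀, y x₀) * deriv y x₀)
            * (pderiv₂ φ (1, 0) (1, 0) (x₀, y x₀)
                + 2 * pderiv₂ φ (1, 0) (0, 1) (x₀, y x₀) * deriv y x₀
                + pderiv₂ φ (0, 1) (0, 1) (x₀, y x₀) * (deriv y x₀) ^ 2)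
          - (pderiv₁ φ (1, 0) (x₀, y x₀)
              + pderiv₁ φ (0, 1) (x₀, y x₀) * deriv y x₀)
            * (pderiv₂ ψ (1, 0) (1, 0) (x₀, y x₀)
                + 2 * pderiv₂ ψ (1, 0) (0, 1) (x₀, y x₀) * deriv y x₀
                + pderiv₂ ψ (0, 1) (0, 1) (x₀, y x₀) * (deriv y x₀) ^ 2))
        / (pderiv₁ ψ (1, 0) (x₀, y x₀)
            + pderiv₁ ψ (0, 1) (x₀, y x₀) * deriv y x₀) ^ 3 := by
  obtain rfl : t = fun x => ψ (x, y x) := funext ht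
  have dφ := aux_d1 φ (hφ.differentiable (by norm_num)) y hy
  have dψ := aux_d1 ψ (hψ.differentiable (by norm_num)) y hy
  have d2φ := aux_d2 φ hφ y hy hy' x₀
  have d2ψ := aux_d2 ψ hψ y hy hy' x₀
  have E1 := huφ.eventually_nhds.mono fun x hx =>
    ((hu _).hasDerivAt.comp x (dψ x)).unique
      ((dφ x).congr_of_eventuallyEq hx)
  have F1 := E1.self_of_nhds
  have F2 := (((hu' _).hasDerivAt.comp x₀ (dψ x₀)).mul d2ψ).unique
      (d2φ.congr_of_eventuallyEq E1)
  simp only [Function.comp] at F1 F2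
  rw [eq_div_iff (pow_ne_zero 3 hD)]
  rw [← F1]
  generalize deriv (deriv u) _ = U2 at *
  generalize deriv u _ = U1 at *
  linear_combination (pderiv₁ ψ (1, 0) (x₀, y x₀)
    + pderiv₁ ψ (0, 1) (x₀, y x₀) * deriv y x₀) * F2 - pderiv₁ ψ (0, 1) (x₀, y x₀) * deriv (deriv y) x₀ * F1
end

section
/- Let y : ℝ → ℝ be three times differentiable with y(x) ≠ 0 for all x ∈ ℝ, and suppose y satisfies the nonlinear third-order ODE y‴(x) + (3 y′(x)/y(x))·(y″(x) − y′(x)) − 3 y″(x) + 2 y′(x) − y(x) = 0 for all x ∈ ℝ. Define u : (0, ∞) → ℝ by u(t) = (y(log t))². Then u is three times differentiable on (0, ∞) and satisfies the linear ODE u‴(t) − 2 u(t)/t³ = 0 for all t > 0. -/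
/-- The point transformation `t = exp x`, `u = y²` maps every nowhere-vanishing
three times differentiable solution of the nonlinear third-order ODE
`y‴ + (3y′/y)(y″ − y′) − 3y″ + 2y′ − y = 0` to a solution of the linear ODE
`u‴ − 2u/t³ = 0` on `(0, ∞)`; moreover `u(t) = (y (log t))²` is three times
differentiable on `(0, ∞)`. -/
theorem linearization_of_third_order_ode
    (y : ℝ → ℝ)
    (hy : Differentiable ℝ y)
    (hy' : Differentiable ℝ (deriv y))
    (hy'' : Differentiable ℝ (deriv (deriv y)))
    (hy0 : ∀ x : ℝ, y x ≠ 0)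
    (hode : ∀ x : ℝ,
      deriv (deriv (deriv y)) x
        + (3 * deriv y x / y x) * (deriv (deriv y) x - deriv y x)
        - 3 * deriv (deriv y) x + 2 * deriv y x - y x = 0)
    (u : ℝ → ℝ) (hu : ∀ t : ℝ, u t = (y (Real.log t)) ^ 2) :
    (∀ t ∈ Set.Ioi (0 : ℝ),
        DifferentiableAt ℝ u t ∧ DifferentiableAt ℝ (deriv u) t
          ∧ DifferentiableAt ℝ (deriv (deriv u)) t)
      ∧ ∀ t ∈ Set.Ioi (0 : ℝ),
          deriv (deriv (deriv u)) t - 2 * u t / t ^ 3 = 0 := by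
  have key : ∀ f : ℝ → ℝ, Differentiable ℝ f → ∀ t : ℝ, 0 < t →
      HasDerivAt (fun s => f (Real.log s)) (deriv f (Real.log t) * t⁻¹) t := by
    intro f hf t ht
    exact (hf (Real.log t)).hasDerivAt.comp t (Real.hasDerivAt_log ht.ne')
  have h1 : ∀ t : ℝ, 0 < t →
      HasDerivAt u (2 * y (Real.log t) * deriv y (Real.log t) / t) t := by
    intro t ht
    have hu' : u = fun t => (y (Real.log t)) ^ 2 := funext hu
    rw [hu']
    refine ((key y hy t ht).pow 2).congr_deriv ?_
    have := ht.ne'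
    field_simp
    try ring
  have h2 : ∀ t : ℝ, 0 < t →
      HasDerivAt (deriv u) ((2 * deriv y (Real.log t) ^ 2
        + 2 * y (Real.log t) * deriv (deriv y) (Real.log t)
        - 2 * y (Real.log t) * deriv y (Real.log t)) / t ^ 2) t := by
    intro t ht
    have e : deriv u =ᶠ[nhds t] fun t => 2 * y (Real.log t) * deriv y (Real.log t) / t := by
      filter_upwards [Ioi_mem_nhds ht] with s hs using (h1 s hs).deriv
    refine HasDerivAt.congr_of_eventuallyEq ?_ e
    refine (((((key y hy t ht).const_mul 2).mul (key _ hy' t ht)).div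
      (hasDerivAt_id t) ht.ne')).congr_deriv ?_
    have := ht.ne'
    simp only [id, Pi.mul_apply]
    field_simp
    try ring
  have h3 : ∀ t : ℝ, 0 < t →
      HasDerivAt (deriv (deriv u)) (2 * u t / t ^ 3) t := by
    intro t ht
    have e : deriv (deriv u) =ᶠ[nhds t] fun t => (2 * deriv y (Real.log t) ^ 2
        + 2 * y (Real.log t) * deriv (deriv y) (Real.log t)
        - 2 * y (Real.log t) * deriv y (Real.log t)) / t ^ 2 := by
      filter_upwards [Ioi_mem_nhds ht] with s hs using (h2 s hs).deriv
    refine HasDerivAt.congr_of_eventuallyEq ?_ e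
    have k0 := key y hy t ht
    have k1 := key _ hy' t ht
    have k2 := key _ hy'' t ht
    refine ((((((k1.pow 2).const_mul 2).add ((k0.const_mul 2).mul k2)).sub
      ((k0.const_mul 2).mul k1)).div ((hasDerivAt_id t).pow 2)
      (pow_ne_zero 2 ht.ne'))).congr_deriv ?_
    have ht0 := ht.ne'
    have o := hode (Real.log t)
    have hne := hy0 (Real.log t)
    rw [hu t]
    simp only [id, Pi.mul_apply, Pi.add_apply, Pi.sub_apply, Pi.pow_apply]
    generalize deriv (deriv (deriv y)) (Real.log t) = d at *
    generalize deriv (deriv y) (Real.log t) = c at *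
    generalize deriv y (Real.log t) = b at *
    generalize y (Real.log t) = a at *
    have o' : a * d + 3 * b * (c - b) - 3 * a * c + 2 * a * b - a ^ 2 = 0 := by
      field_simp at o
      linear_combination o
    field_simp
    push_cast
    linear_combination t * o'
  refine ⟨fun t ht => ⟨(h1 t ht).differentiableAt, (h2 t ht).differentiableAt,
    (h3 t ht).differentiableAt⟩, fun t ht => ?_⟩
  rw [(h3 t ht).deriv, sub_self]
end
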